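/- arXiv:2210.10199 — 3 statements merged into one kernel-verified Lean document; each statement's English description precedes it below -/
import Mathlib

section
/- (Lemma: general consistent maximizers.) Let 𝒳 and Θ be compact topological spaces, 𝒵 a finite nonempty type, α : 𝒳 × 𝒵 → ℝ continuous in x for every z ∈ 𝒵, and p : Θ → (𝒵 → ℝ) continuous with each p(θ) a probability weight vector on 𝒵. Assume p is surjective onto the probability weight vectors: for every probability weight vector q on 𝒵 there exists θ ∈ Θ with p(θ) = q. Define α̂(x, θ) = Σ_{z ∈ 𝒵} p(θ)(z) · α(x, z). If (x*, θ*) maximizes α̂ over 𝒳 × Θ, then for every z ∈ 𝒵 with p(θ*)(z) > 0, the pair (x*, z) maximizes α over 𝒳 × 𝒵. -/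
/-! A point mass at `z` turns the probabilistic objective into `α · z`, so the maximum `M` of the
probabilistic objective dominates every value of `α`. But `M` is itself the `p θ*`-average of the
values `α x* z`, none of which exceeds `M`; hence each of them with positive weight equals `M`. -/

section WeightedSums

variable {ι 𝕜 E : Type*} [Semiring 𝕜] [PartialOrder 𝕜]
  [AddCommMonoid E] [PartialOrder E] [IsOrderedCancelAddMonoid E] [Module 𝕜 E]
  [PosSMulStrictMono 𝕜 E]

theorem eq_of_sum_smul_eq_sum_smul_of_le {s : Finset ι} {w : ι → 𝕜} {f g : ι → E}
    (hw : ∀ i ∈ s, 0 ≤ w i) (hfg : ∀ i ∈ s, f i ≤ g i)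
    (hsum : ∑ i ∈ s, w i • f i = ∑ i ∈ s, w i • g i) {i : ι} (hi : i ∈ s) (hwi : 0 < w i) :
    f i = g i := by
  have hterm : w i • f i = w i • g i :=
    (Finset.sum_eq_sum_iff_of_le fun j hj =>
      smul_le_smul_of_nonneg_left (hfg j hj) (hw j hj)).mp hsum i hi
  by_contra hne
  exact (smul_lt_smul_of_pos_left ((hfg i hi).lt_of_ne hne) hwi).ne hterm

theorem eq_sum_smul_of_mem_stdSimplex_of_forall_le [Fintype ι] {w : ι → 𝕜}
    (hw : w ∈ stdSimplex 𝕜 ι) {f : ι → E} (hf : ∀ i, f i ≤ ∑ j, w j • f j) {i : ι}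
    (hwi : 0 < w i) : f i = ∑ j, w j • f j := by
  refine eq_of_sum_smul_eq_sum_smul_of_le (g := fun _ => ∑ j, w j • f j)
    (fun j _ => hw.1 j) (fun j _ => hf j) ?_ (Finset.mem_univ i) hwi
  rw [← Finset.sum_smul, hw.2, one_smul]

theorem stmt_3_general {X Θ Z : Type*} [Fintype Z] [DecidableEq Z] (α : X → Z → E)
    (p : Θ → Z → 𝕜) (hpoint : ∀ z, ∃ θ, p θ = Pi.single z 1) {xstar : X} {θstar : Θ}
    (hstar : p θstar ∈ stdSimplex 𝕜 Z)
    (hmax : ∀ x θ, ∑ z, p θ z • α x z ≤ ∑ z, p θstar z • α xstar z) :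
    ∀ z, 0 < p θstar z → ∀ x' z', α x' z' ≤ α xstar z := by
  have hbound (x : X) (z : Z) : α x z ≤ ∑ z, p θstar z • α xstar z := by
    obtain ⟨θ, hθ⟩ := hpoint z
    simpa only [hθ, Fintype.sum_single_smul, one_smul] using hmax x θ
  intro z hz x' z'
  rw [eq_sum_smul_of_mem_stdSimplex_of_forall_le hstar (hbound xstar) hz]
  exact hbound x' z'

end WeightedSums

/-- Lemma (general consistent maximizers): if `(x*, θ*)` maximizes the probabilistic objective
`α̂(x, θ) = ∑ z, p θ z * α x z` over `𝒳 × Θ`, then for every `z` with `p θ* z > 0`,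
the pair `(x*, z)` maximizes `α` over `𝒳 × 𝒵`. -/
theorem stmt_3 {X Θ Z : Type*} [TopologicalSpace X] [CompactSpace X]
    [TopologicalSpace Θ] [CompactSpace Θ] [Fintype Z] [Nonempty Z]
    (α : X → Z → ℝ) (hα : ∀ z, Continuous fun x => α x z)
    (p : Θ → Z → ℝ) (hp : ∀ z, Continuous fun θ => p θ z)
    (hp0 : ∀ θ z, 0 ≤ p θ z) (hp1 : ∀ θ, ∑ z, p θ z = 1)
    (hsurj : ∀ q : Z → ℝ, (∀ z, 0 ≤ q z) → ∑ z, q z = 1 → ∃ θ, p θ = q)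
    (xstar : X) (θstar : Θ)
    (hmax : ∀ x θ, ∑ z, p θ z * α x z ≤ ∑ z, p θstar z * α xstar z) :
    ∀ z, 0 < p θstar z → ∀ x' z', α x' z' ≤ α xstar z := by
  classical
  exact stmt_3_general α p (fun z => (single_mem_stdSimplex ℝ z).elim (hsurj _))
    ⟨hp0 θstar, hp1 θstar⟩ hmax
end

section
/- (Corollary: unique optimizer.) Let 𝒳 and Θ be compact topological spaces, 𝒵 a finite nonempty type, α : 𝒳 × 𝒵 → ℝ continuous in x for every z ∈ 𝒵, and p : Θ → (𝒵 → ℝ) continuous with each p(θ) a probability weight vector on 𝒵 and p surjective onto the probability weight vectors. Suppose α has a unique maximizer (x*, z*) over 𝒳 × 𝒵. Then every maximizer (x, θ) of the probabilistic objective α̂(x, θ) = Σ_z p(θ)(z) α(x, z) over 𝒳 × Θ satisfies x = x* and p(θ) is the point mass at z*, i.e. p(θ)(z*) = 1 and p(θ)(z) = 0 for z ≠ z*. -/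
/-!
The point mass at `zstar` paired with `xstar` gives the probabilistic objective the value
`α xstar zstar`, so at a maximizer `(x, θ)` a weighted average of the numbers `α x z`, each at most
`α xstar zstar`, is at least `α xstar zstar`. Hence `(x, z)` maximizes `α` for every `z` of nonzero
weight, and uniqueness leaves only `zstar` in the support.
-/

section WeightedAverage

variable {ι R E : Type*} [Fintype ι] [Semiring R] [PartialOrder R]
  [AddCommMonoid E] [PartialOrder E] [IsOrderedCancelAddMonoid E] [Module R E]
  [PosSMulStrictMono R E]

theorem eq_of_le_sum_smul_of_mem_stdSimplex {w : ι → R} {f : ι → E} {M : E}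
    (hw : w ∈ stdSimplex R ι) (hf : ∀ i, f i ≤ M) (hM : M ≤ ∑ i, w i • f i)
    {i : ι} (hi : w i ≠ 0) : f i = M := by
  have sum_smul_const : ∑ j, w j • M = M := by
    rw [← Finset.sum_smul, hw.2, one_smul]
  have smul_le (j : ι) : w j • f j ≤ w j • M := smul_le_smul_of_nonneg_left (hf j) (hw.1 j)
  have sum_eq : ∑ j, w j • f j = ∑ j, w j • M :=
    (Finset.sum_le_sum fun j _ => smul_le j).antisymm (sum_smul_const.trans_le hM)
  have smul_eq : w i • f i = w i • M :=
    (Finset.sum_eq_sum_iff_of_le fun j _ => smul_le j).mp sum_eq i (Finset.mem_univ i)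
  by_contra hne
  exact (smul_lt_smul_of_pos_left ((hf i).lt_of_ne hne) ((hw.1 i).lt_of_ne' hi)).ne smul_eq

end WeightedAverage

theorem eq_single_sum_of_forall_ne {ι M : Type*} [Fintype ι] [DecidableEq ι] [AddCommMonoid M]
    {w : ι → M} {i : ι} (h : ∀ j, j ≠ i → w j = 0) : w = Pi.single i (∑ j, w j) := by
  rw [Fintype.sum_eq_single i h]
  ext j
  obtain rfl | hj := eq_or_ne j i
  · rw [Pi.single_eq_same]
  · rw [h j hj, Pi.single_eq_of_ne hj]

theorem stmt_4_general {X Θ Z R E : Type*} [Fintype Z] [DecidableEq Z]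
    [Semiring R] [PartialOrder R] [Nontrivial R]
    [AddCommMonoid E] [PartialOrder E] [IsOrderedCancelAddMonoid E] [Module R E]
    [PosSMulStrictMono R E]
    (α : X → Z → E) (p : Θ → Z → R) (hp : ∀ θ, p θ ∈ stdSimplex R Z) (xstar : X) (zstar : Z)
    (hpoint : ∃ θ, p θ = Pi.single zstar 1)
    (hmax : ∀ x z, α x z ≤ α xstar zstar)
    (huniq : ∀ x z, (∀ x' z', α x' z' ≤ α x z) → x = xstar ∧ z = zstar)
    (x : X) (θ : Θ) (hopt : ∀ x' θ', ∑ z, p θ' z • α x' z ≤ ∑ z, p θ z • α x z) :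
    x = xstar ∧ p θ = Pi.single zstar 1 := by
  obtain ⟨θ₀, hθ₀⟩ := hpoint
  have max_le_average : α xstar zstar ≤ ∑ z, p θ z • α x z := by
    simpa [hθ₀, Pi.single_apply, ite_smul] using hopt xstar θ₀
  have eq_star_of_ne_zero (z : Z) (hz : p θ z ≠ 0) : x = xstar ∧ z = zstar := by
    have value_eq := eq_of_le_sum_smul_of_mem_stdSimplex (hp θ) (hmax x) max_le_average hz
    exact huniq x z fun x' z' => (hmax x' z').trans_eq value_eq.symm
  have weight_eq_zero (z : Z) (hz : z ≠ zstar) : p θ z = 0 :=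
    of_not_not fun hpz => hz (eq_star_of_ne_zero z hpz).2
  have weights_eq : p θ = Pi.single zstar 1 := by
    simpa only [(hp θ).2] using eq_single_sum_of_forall_ne weight_eq_zero
  exact ⟨(eq_star_of_ne_zero zstar (by simp [weights_eq])).1, weights_eq⟩

/-- Corollary (unique optimizer): if `α` has a unique maximizer `(x*, z*)`, then every maximizer
`(x, θ)` of the probabilistic objective satisfies `x = x*` and `p θ` is the point mass at `z*`. -/
theorem stmt_4 {X Θ Z : Type*} [TopologicalSpace X] [CompactSpace X]
    [TopologicalSpace Θ] [CompactSpace Θ] [Fintype Z] [Nonempty Z]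
    (α : X → Z → ℝ) (hα : ∀ z, Continuous fun x => α x z)
    (p : Θ → Z → ℝ) (hp : ∀ z, Continuous fun θ => p θ z)
    (hp0 : ∀ θ z, 0 ≤ p θ z) (hp1 : ∀ θ, ∑ z, p θ z = 1)
    (hsurj : ∀ q : Z → ℝ, (∀ z, 0 ≤ q z) → ∑ z, q z = 1 → ∃ θ, p θ = q)
    (xstar : X) (zstar : Z)
    (hmax : ∀ x z, α x z ≤ α xstar zstar)
    (huniq : ∀ x z, (∀ x' z', α x' z' ≤ α x z) → x = xstar ∧ z = zstar) :
    ∀ x θ, (∀ x' θ', ∑ z, p θ' z * α x' z ≤ ∑ z, p θ z * α x z) →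
      x = xstar ∧ p θ zstar = 1 ∧ ∀ z, z ≠ zstar → p θ z = 0 := by
  classical
  intro x θ hopt
  obtain ⟨hx, hθ⟩ := stmt_4_general α p (fun θ => ⟨hp0 θ, hp1 θ⟩) xstar zstar
    (hsurj _ (single_mem_stdSimplex ℝ zstar).1 (single_mem_stdSimplex ℝ zstar).2)
    hmax huniq x θ hopt
  simp +contextual [hx, hθ]
end

section
/- (Theorem 1: consistent maximizers.) Let 𝒳 and Θ be compact topological spaces, 𝒵 a finite nonempty type, α : 𝒳 × 𝒵 → ℝ continuous in x for every z ∈ 𝒵, and p : Θ → (𝒵 → ℝ) continuous with each p(θ) a probability weight vector on 𝒵 and p surjective onto the probability weight vectors. Let ℋ* = {(x, z) ∈ 𝒳 × 𝒵 : α(x, z) = max_{(x', z')} α(x', z')} be the set of maximizers of α, let 𝒥* ⊆ 𝒳 × Θ be the set of maximizers of the probabilistic objective α̂(x, θ) = Σ_z p(θ)(z) α(x, z), and define Ĥ* = {(x, z) : ∃ θ, (x, θ) ∈ 𝒥* and p(θ)(z) > 0}. Then Ĥ* = ℋ*. -/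
/-!
A weighted average of the values `α x z` over `z` never exceeds an upper bound of `α`, and point
masses give back the values themselves, so `α̂` and `α` have the same upper bounds. When the
average attains such a bound, every `z` of positive weight must attain it too: this gives
`Ĥ* ⊆ ℋ*`. Conversely, a maximizer `(x, z)` of `α` is reached by the point mass at `z`.
-/

section StdSimplex

variable {R M Z : Type*} [Semiring R] [PartialOrder R] [AddCommMonoid M] [PartialOrder M]
  [Module R M] [Fintype Z] {w : Z → R} {a : Z → M} {b : M}

theorem sum_smul_le_of_mem_stdSimplex [IsOrderedAddMonoid M] [PosSMulMono R M]
    (hw : w ∈ stdSimplex R Z) (hab : ∀ z, a z ≤ b) : ∑ z, w z • a z ≤ b :=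
  calc
    ∑ z, w z • a z ≤ ∑ z, w z • b :=
      Finset.sum_le_sum fun z _ => smul_le_smul_of_nonneg_left (hab z) (hw.1 z)
    _ = b := by rw [← Finset.sum_smul, hw.2, one_smul]

theorem eq_of_sum_smul_eq_of_mem_stdSimplex [IsOrderedCancelAddMonoid M] [PosSMulStrictMono R M]
    (hw : w ∈ stdSimplex R Z) (hab : ∀ z, a z ≤ b) (hsum : ∑ z, w z • a z = b) {z : Z}
    (hz : 0 < w z) : a z = b := by
  have hsum_const : ∑ z, w z • a z = ∑ z, w z • b := by
    rw [hsum, ← Finset.sum_smul, hw.2, one_smul]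
  have hterm : w z • a z = w z • b :=
    (Finset.sum_eq_sum_iff_of_le fun i _ =>
      smul_le_smul_of_nonneg_left (hab i) (hw.1 i)).1 hsum_const z (Finset.mem_univ z)
  exact eq_of_le_of_not_lt (hab z) fun hlt => (smul_lt_smul_of_pos_left hlt hz).ne hterm

end StdSimplex

section ProbabilisticObjective

variable {R M X Θ Z : Type*} [Semiring R] [AddCommMonoid M] [Module R M] [Fintype Z]
  {α : X → Z → M} {p : Θ → Z → R}

/-- The probabilistic objective `α̂ (x, θ)`: the average of the acquisition values `α x z` when the
discrete design `z` has weight `p θ z`. -/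
def probabilisticObjective (α : X → Z → M) (p : Θ → Z → R) (x : X) (θ : Θ) : M :=
  ∑ z, p θ z • α x z

theorem probabilisticObjective_of_eq_single [DecidableEq Z] {θ : Θ} {z : Z}
    (hθ : p θ = Pi.single z 1) (x : X) : probabilisticObjective α p x θ = α x z := by
  simp [probabilisticObjective, hθ, Pi.single_apply]

variable [PartialOrder R] [PartialOrder M]

theorem probabilisticObjective_le_iff [DecidableEq Z] [IsOrderedAddMonoid M] [PosSMulMono R M]
    (hp : ∀ θ, p θ ∈ stdSimplex R Z) (hvertex : ∀ z, Pi.single z 1 ∈ Set.range p) {b : M} :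
    (∀ x θ, probabilisticObjective α p x θ ≤ b) ↔ ∀ x z, α x z ≤ b := by
  refine ⟨fun h x z => ?_, fun h x θ => sum_smul_le_of_mem_stdSimplex (hp θ) (h x)⟩
  obtain ⟨θ, hθ⟩ := hvertex z
  simpa only [probabilisticObjective_of_eq_single hθ] using h x θ

theorem stmt_10_general [DecidableEq Z] [ZeroLEOneClass R] [Nontrivial R]
    [IsOrderedCancelAddMonoid M] [PosSMulStrictMono R M] (α : X → Z → M) (p : Θ → Z → R)
    (hp : ∀ θ, p θ ∈ stdSimplex R Z) (hvertex : ∀ z, Pi.single z 1 ∈ Set.range p) :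
    {xz : X × Z | ∃ θ : Θ,
        (∀ x' θ', probabilisticObjective α p x' θ' ≤ probabilisticObjective α p xz.1 θ) ∧
        0 < p θ xz.2} =
      {xz : X × Z | ∀ x' z', α x' z' ≤ α xz.1 xz.2} := by
  ext ⟨x, z⟩
  simp only [Set.mem_ofPred_eq, probabilisticObjective_le_iff hp hvertex]
  constructor
  · rintro ⟨θ, hmax, hpos⟩
    have heq : α x z = probabilisticObjective α p x θ :=
      eq_of_sum_smul_eq_of_mem_stdSimplex (hp θ) (hmax x) rfl hpos
    rwa [heq]
  · intro hmax
    obtain ⟨θ, hθ⟩ := hvertex z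
    refine ⟨θ, ?_, by simp [hθ]⟩
    rwa [probabilisticObjective_of_eq_single hθ]

end ProbabilisticObjective

/-- Theorem 1 (consistent maximizers): the set `Ĥ*` of pairs `(x, z)` such that `(x, θ)`
maximizes the probabilistic objective for some `θ` and `z` lies in the support of `p θ`
equals the set `ℋ*` of maximizers of the acquisition function `α`. -/
theorem stmt_10 {X Θ Z : Type*} [TopologicalSpace X] [CompactSpace X]
    [TopologicalSpace Θ] [CompactSpace Θ] [Fintype Z] [Nonempty Z]
    (α : X → Z → ℝ) (hα : ∀ z, Continuous fun x => α x z)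
    (p : Θ → Z → ℝ) (hp : ∀ z, Continuous fun θ => p θ z)
    (hp0 : ∀ θ z, 0 ≤ p θ z) (hp1 : ∀ θ, ∑ z, p θ z = 1)
    (hsurj : ∀ q : Z → ℝ, (∀ z, 0 ≤ q z) → ∑ z, q z = 1 → ∃ θ, p θ = q) :
    {xz : X × Z | ∃ θ : Θ,
        (∀ x' : X, ∀ θ' : Θ, ∑ z, p θ' z * α x' z ≤ ∑ z, p θ z * α xz.1 z) ∧
        0 < p θ xz.2} =
      {xz : X × Z | ∀ x' : X, ∀ z' : Z, α x' z' ≤ α xz.1 xz.2} := by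
  classical
  exact stmt_10_general α p (fun θ => ⟨hp0 θ, hp1 θ⟩) fun z =>
    hsurj _ (single_mem_stdSimplex ℝ z).1 (single_mem_stdSimplex ℝ z).2
end
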